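/- Let (B, Δ, ε, 1) be a coaugmented counital coalgebra. Define on B⊗B the map Δ'(x⊗y) = (x_{(1)}⊗1)⊗(x_{(2)}⊗y) + (x⊗y_{(1)})⊗(1⊗y_{(2)}) − (x⊗1)⊗(1⊗y). Then (B⊗B, Δ', ε⊗ε, 1⊗1) is a coaugmented counital coassociative coalgebra. -/

import Mathlib

open TensorProduct

/-!
In Sweedler notation, `Δ'` restricts to the coproduct of `B` on each of the two coaugmented copies
`B ⊗ 1` and `1 ⊗ B`: since `1` is group-like, two of the three terms of `Δ'` cancel there, leaving
`Δ'(x⊗1) = (x₍₁₎⊗1)⊗(x₍₂₎⊗1)` and `Δ'(1⊗y) = (1⊗y₍₁₎)⊗(1⊗y₍₂₎)`. In `Δ'(x⊗y)` every left factor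
except `x⊗y₍₁₎` lies in `B ⊗ 1` and every right factor except `x₍₂₎⊗y` lies in `1 ⊗ B`, so
both iterates of `Δ'` expand to the same five terms
`(x₍₁₎⊗1)(x₍₂₎⊗1)(x₍₃₎⊗y) + (x₍₁₎⊗1)(x₍₂₎⊗y₍₁₎)(1⊗y₍₂₎) + (x⊗y₍₁₎)(1⊗y₍₂₎)(1⊗y₍₃₎)
  - (x₍₁₎⊗1)(x₍₂₎⊗1)(1⊗y) - (x⊗1)(1⊗y₍₁₎)(1⊗y₍₂₎)`,
where coassociativity of `B` is used for the first and the third.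
In the counit laws, `ε(1) = 1` makes the subtracted term cancel one of the two others.
-/

/-- If `(B, Δ, ε, 1)` is a coaugmented counital coalgebra, then
`Δ'(x⊗y) = (x₍₁₎⊗1)⊗(x₍₂₎⊗y) + (x⊗y₍₁₎)⊗(1⊗y₍₂₎) − (x⊗1)⊗(1⊗y)` makes
`(B⊗B, Δ', ε⊗ε, 1⊗1)` a coaugmented counital coassociative coalgebra. -/
theorem stmt8 (K B : Type*) [Field K] [AddCommGroup B] [Module K B] [Coalgebra K B]
    (one : B) (hone : Coalgebra.comul one = one ⊗ₜ[K] one)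
    (honeCounit : Coalgebra.counit (R := K) one = 1) :
    ∀ Δ' : B ⊗[K] B →ₗ[K] (B ⊗[K] B) ⊗[K] (B ⊗[K] B),
      Δ' = LinearMap.rTensor (B ⊗[K] B) ((TensorProduct.mk K B B).flip one)
            ∘ₗ (TensorProduct.assoc K B B B).toLinearMap
            ∘ₗ LinearMap.rTensor B (Coalgebra.comul (R := K))
          + LinearMap.lTensor (B ⊗[K] B) (TensorProduct.mk K B B one)
            ∘ₗ (TensorProduct.assoc K B B B).symm.toLinearMap
            ∘ₗ LinearMap.lTensor B (Coalgebra.comul (R := K))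
          - TensorProduct.map ((TensorProduct.mk K B B).flip one) (TensorProduct.mk K B B one) →
    ∀ ε' : B ⊗[K] B →ₗ[K] K,
      ε' = (TensorProduct.lid K K).toLinearMap
            ∘ₗ TensorProduct.map (Coalgebra.counit (R := K)) (Coalgebra.counit (R := K)) →
      -- coassociativity
      ((TensorProduct.assoc K (B ⊗[K] B) (B ⊗[K] B) (B ⊗[K] B)).toLinearMap
          ∘ₗ LinearMap.rTensor (B ⊗[K] B) Δ' ∘ₗ Δ'
        = LinearMap.lTensor (B ⊗[K] B) Δ' ∘ₗ Δ')
      -- left counit law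
      ∧ (TensorProduct.lid K (B ⊗[K] B)).toLinearMap
          ∘ₗ LinearMap.rTensor (B ⊗[K] B) ε' ∘ₗ Δ' = LinearMap.id
      -- right counit law
      ∧ (TensorProduct.rid K (B ⊗[K] B)).toLinearMap
          ∘ₗ LinearMap.lTensor (B ⊗[K] B) ε' ∘ₗ Δ' = LinearMap.id
      -- the unit `1 ⊗ 1` is group-like, with counit one
      ∧ Δ' (one ⊗ₜ[K] one) = (one ⊗ₜ[K] one) ⊗ₜ[K] (one ⊗ₜ[K] one)
      ∧ ε' (one ⊗ₜ[K] one) = 1 := by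
  intro Δ' hΔ ε' hε
  have ε_tmul (x y : B) : ε' (x ⊗ₜ y) =
      Coalgebra.counit (R := K) x * Coalgebra.counit (R := K) y := by
    simp [hε]
  have Δ_tmul (x y : B) (r : Coalgebra.Repr K x (B × B)) (s : Coalgebra.Repr K y (B × B)) :
      Δ' (x ⊗ₜ y) = ∑ i ∈ r.index, (r.left i ⊗ₜ[K] one) ⊗ₜ[K] (r.right i ⊗ₜ[K] y)
        + ∑ j ∈ s.index, (x ⊗ₜ[K] s.left j) ⊗ₜ[K] (one ⊗ₜ[K] s.right j)
        - (x ⊗ₜ[K] one) ⊗ₜ[K] (one ⊗ₜ[K] y) := by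
    simp [hΔ, ← r.eq, ← s.eq, sum_tmul, tmul_sum]
  have Δ_left (x : B) (r : Coalgebra.Repr K x (B × B)) :
      Δ' (x ⊗ₜ one) = ∑ i ∈ r.index, (r.left i ⊗ₜ[K] one) ⊗ₜ[K] (r.right i ⊗ₜ[K] one) := by
    simp [hΔ, ← r.eq, hone, sum_tmul]
  have Δ_right (y : B) (s : Coalgebra.Repr K y (B × B)) :
      Δ' (one ⊗ₜ y) = ∑ j ∈ s.index, (one ⊗ₜ[K] s.left j) ⊗ₜ[K] (one ⊗ₜ[K] s.right j) := by
    simp [hΔ, ← s.eq, hone, tmul_sum]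
  refine ⟨?_, ?_, ?_, ?_, ?_⟩
  · refine TensorProduct.ext' fun x y => ?_
    let R (b : B) : Coalgebra.Repr K b (B × B) := Coalgebra.Repr.arbitrary K b
    have coassoc_x := Coalgebra.sum_map_tmul_tmul_eq (R := K) ((TensorProduct.mk K B B).flip one)
      ((TensorProduct.mk K B B).flip one) ((TensorProduct.mk K B B).flip y) x
      (repr := R x) (a₁ := fun i => R _) (a₂ := fun i => R _)
    have coassoc_y := Coalgebra.sum_map_tmul_tmul_eq (R := K) (TensorProduct.mk K B B x)
      (TensorProduct.mk K B B one) (TensorProduct.mk K B B one) y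
      (repr := R y) (a₁ := fun i => R _) (a₂ := fun i => R _)
    simp only [LinearMap.flip_apply, TensorProduct.mk_apply] at coassoc_x coassoc_y
    simp only [LinearMap.comp_apply, LinearEquiv.coe_coe, Δ_tmul x y (R x) (R y), map_add, map_sub,
      map_sum, LinearMap.rTensor_tmul, LinearMap.lTensor_tmul, Δ_left _ (R _), Δ_right _ (R _)]
    simp only [Δ_tmul _ _ (R _) (R _), sum_tmul, tmul_sum, add_tmul, tmul_add, sub_tmul, tmul_sub,
      map_add, map_sub, map_sum, TensorProduct.assoc_tmul, Finset.sum_add_distrib,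
      Finset.sum_sub_distrib]
    rw [coassoc_x, coassoc_y,
      Finset.sum_comm (s := (R y).index) (t := (R x).index)]
    abel
  · refine TensorProduct.ext' fun x y => ?_
    have r := Coalgebra.Repr.arbitrary K x
    have s := Coalgebra.Repr.arbitrary K y
    have counit_x := congrArg (fun b => b ⊗ₜ[K] y) (Coalgebra.sum_counit_smul r)
    have counit_y := congrArg (fun b => one ⊗ₜ[K] b) (Coalgebra.sum_counit_smul s)
    simp only [sum_tmul, tmul_sum, tmul_smul, ← smul_tmul'] at counit_x counit_y
    simp [Δ_tmul x y r s, ε_tmul, honeCounit, mul_smul, ← Finset.smul_sum, counit_x, counit_y]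
  · refine TensorProduct.ext' fun x y => ?_
    have r := Coalgebra.Repr.arbitrary K x
    have s := Coalgebra.Repr.arbitrary K y
    have counit_x := congrArg (fun b => b ⊗ₜ[K] one)
      (congrArg (TensorProduct.rid K B) (Coalgebra.sum_tmul_counit_eq r))
    have counit_y := congrArg (fun b => x ⊗ₜ[K] b)
      (congrArg (TensorProduct.rid K B) (Coalgebra.sum_tmul_counit_eq s))
    simp only [map_sum, rid_tmul, one_smul, sum_tmul, tmul_sum, tmul_smul, ← smul_tmul']
      at counit_x counit_y
    simp [Δ_tmul x y r s, ε_tmul, honeCounit, mul_comm _ (Coalgebra.counit (R := K) y), mul_smul,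
      ← Finset.smul_sum, counit_x, counit_y]
  · simp [hΔ, hone]
  · simp [ε_tmul, honeCounit]
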